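/- (Weber–Schafheitlin-type triple Bessel integral) Let ρ₁, ρ₂, ρ₃ > 0 with |ρ₂ - ρ₃| < ρ₁ < ρ₂ + ρ₃, and let γ₃ ∈ (0,π) satisfy ρ₁² = ρ₂² + ρ₃² - 2ρ₂ρ₃cos γ₃. Then for every integer ℓ, ∫₀^∞ J₀(ρ₁λ) J_ℓ(ρ₂λ) J_ℓ(ρ₃λ) λ dλ = cos(ℓγ₃)/(πρ₂ρ₃ sin γ₃). -/

import Mathlib

open Real MeasureTheory Filter Topology Complex

/-- Bessel function of the first kind of integer order, via the standard
integral representation `J_n(x) = (1/π) ∫₀^π cos (n θ - x sin θ) dθ`. -/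
noncomputable def besselJ (n : ℤ) (x : ℝ) : ℝ :=
  (1 / Real.pi) * ∫ θ in (0:ℝ)..Real.pi, Real.cos (n * θ - x * Real.sin θ)

/-!
By Gegenbauer's product formula `J_ℓ(ρ₂ λ) J_ℓ(ρ₃ λ)` is the average of `cos(ℓ φ) J₀(R(φ) λ)` over
`φ ∈ (0, π)`, where `R(φ)` is the third side of the triangle with sides `ρ₂`, `ρ₃` enclosing the
angle `φ`. So the question is whether `∫₀^T J₀(ρ₁ λ) J₀(R(φ) λ) λ dλ` acts as a delta function at
`R(φ) = ρ₁`, that is, at `φ = γ₃`. Subtracting a multiple of `sin φ` from `cos(ℓ φ)`, one may assume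
that the amplitude vanishes at `γ₃`. Its zero then cancels the denominator `R² - ρ₁²` in Lommel's
closed form of the inner integral, and what is left tends to zero by a Riemann–Lebesgue argument.
The multiple of `sin φ` is computed exactly: `sin φ dφ` is proportional to `R dR`, the integral over
`φ` is elementary, and there remains Weber's discontinuous integral of `J₀(ρ₁ λ) J₁(b λ)`, which is
`0` for `b < ρ₁` and `1 / b` for `b > ρ₁`.
-/

section IntervalIntegral

variable {E : Type*} [NormedAddCommGroup E] [NormedSpace ℝ E]

lemma integral_integral_swap_of_continuous {F : ℝ → ℝ → E} (hF : Continuous F.uncurry)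
    (a b c d : ℝ) :
    ∫ x in a..b, ∫ y in c..d, F x y = ∫ y in c..d, ∫ x in a..b, F x y :=
  intervalIntegral_intervalIntegral_swap <|
    (hF.continuousOn.integrableOn_compact (isCompact_uIcc.prod isCompact_uIcc)).mono_set
      (Set.prod_mono Set.uIoc_subset_uIcc Set.uIoc_subset_uIcc)

lemma integral_zero_two_mul_eq_integral_add_reflect {f : ℝ → E} (hf : Continuous f) (c : ℝ) :
    ∫ t in (0:ℝ)..2 * c, f t = ∫ t in (0:ℝ)..c, (f t + f (2 * c - t)) := by
  have hreflect : ∫ t in (0:ℝ)..c, f (2 * c - t) = ∫ t in c..2 * c, f t := by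
    rw [intervalIntegral.integral_comp_sub_left, sub_zero, two_mul, add_sub_cancel_right]
  rw [intervalIntegral.integral_add (hf.intervalIntegrable _ _)
    (Continuous.intervalIntegrable (by fun_prop) _ _), hreflect,
    intervalIntegral.integral_add_adjacent_intervals (hf.intervalIntegrable _ _)
      (hf.intervalIntegrable _ _)]

lemma intervalIntegral_comp_add_left_of_periodic {f : ℝ → E} {c : ℝ} (hf : Function.Periodic f c)
    (s : ℝ) : ∫ t in (0:ℝ)..c, f (s + t) = ∫ t in (0:ℝ)..c, f t := by
  simpa using hf.intervalIntegral_add_eq s 0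

end IntervalIntegral

section BesselJ

variable (n : ℤ) (x : ℝ)

@[fun_prop]
lemma continuous_besselJ : Continuous (besselJ n) := by
  unfold besselJ
  refine continuous_const.mul ?_
  apply intervalIntegral.continuous_parametric_intervalIntegral_of_continuous'
  fun_prop

lemma abs_besselJ_le_one : |besselJ n x| ≤ 1 := by
  have hint : ‖∫ θ in (0:ℝ)..π, Real.cos (n * θ - x * Real.sin θ)‖ ≤ 1 * |π - 0| :=
    intervalIntegral.norm_integral_le_of_norm_le_const fun θ _ => Real.abs_cos_le_one _
  rw [sub_zero, one_mul, abs_of_pos pi_pos, Real.norm_eq_abs] at hint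
  rw [besselJ, one_div_mul_eq_div, abs_div, abs_of_pos pi_pos]
  exact div_le_one_of_le₀ hint pi_pos.le

lemma hasDerivAt_besselJ :
    HasDerivAt (besselJ n) ((besselJ (n - 1) x - besselJ (n + 1) x) / 2) x := by
  have hderiv := (intervalIntegral.hasDerivAt_integral_of_dominated_loc_of_deriv_le
    (μ := volume) (a := 0) (b := π) (s := Set.univ) (x₀ := x) (bound := fun _ => 1)
    (F := fun y θ => Real.cos (n * θ - y * Real.sin θ))
    (F' := fun y θ => Real.sin (n * θ - y * Real.sin θ) * Real.sin θ) Filter.univ_mem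
    (.of_forall fun y => (Continuous.aestronglyMeasurable (by fun_prop)))
    (Continuous.intervalIntegrable (by fun_prop) _ _)
    (Continuous.aestronglyMeasurable (by fun_prop))
    (.of_forall fun θ _ y _ => by
      rw [norm_mul]
      exact mul_le_one₀ (Real.abs_sin_le_one _) (norm_nonneg _) (Real.abs_sin_le_one _))
    (continuous_const.intervalIntegrable _ _)
    (.of_forall fun θ _ y _ => by
      simpa using (((hasDerivAt_id y).mul_const (Real.sin θ)).const_sub (n * θ)).cos)).2
  refine (hderiv.const_mul (1 / π)).congr_deriv ?_
  rw [besselJ, besselJ, ← mul_sub, ← intervalIntegral.integral_sub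
    (Continuous.intervalIntegrable (by fun_prop) _ _)
    (Continuous.intervalIntegrable (by fun_prop) _ _), mul_div_assoc,
    ← intervalIntegral.integral_div]
  congr 2 with θ
  push_cast
  rw [show (n - 1 : ℝ) * θ - x * Real.sin θ = (n * θ - x * Real.sin θ) - θ by ring,
    show (n + 1 : ℝ) * θ - x * Real.sin θ = (n * θ - x * Real.sin θ) + θ by ring,
    Real.cos_sub _ θ, Real.cos_add _ θ]
  ring

lemma mul_besselJ_pred_add_succ :
    x * (besselJ (n - 1) x + besselJ (n + 1) x) = 2 * n * besselJ n x := by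
  have hftc : ∫ θ in (0:ℝ)..π, Real.cos (n * θ - x * Real.sin θ) * (n - x * Real.cos θ) = 0 := by
    rw [intervalIntegral.integral_eq_sub_of_hasDerivAt
      (f := fun θ => Real.sin (n * θ - x * Real.sin θ))
      (fun θ _ => by
        simpa using (((hasDerivAt_id θ).const_mul (n : ℝ)).sub
          ((Real.hasDerivAt_sin θ).const_mul x)).sin)
      (Continuous.intervalIntegrable (by fun_prop) _ _)]
    simp [Real.sin_int_mul_pi]
  have hsplit : ∫ θ in (0:ℝ)..π, Real.cos (n * θ - x * Real.sin θ) * (n - x * Real.cos θ) =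
      π * (n * besselJ n x - x / 2 * (besselJ (n - 1) x + besselJ (n + 1) x)) := by
    rw [besselJ, besselJ, besselJ, ← mul_add, ← intervalIntegral.integral_add
      (Continuous.intervalIntegrable (by fun_prop) _ _)
      (Continuous.intervalIntegrable (by fun_prop) _ _), mul_left_comm, mul_left_comm (x / 2),
      ← mul_sub, ← mul_assoc, mul_one_div_cancel pi_ne_zero, one_mul,
      ← intervalIntegral.integral_const_mul, ← intervalIntegral.integral_const_mul,
      ← intervalIntegral.integral_sub (Continuous.intervalIntegrable (by fun_prop) _ _)
      (Continuous.intervalIntegrable (by fun_prop) _ _)]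
    congr 1 with θ
    push_cast
    rw [show (n - 1 : ℝ) * θ - x * Real.sin θ = (n * θ - x * Real.sin θ) - θ by ring,
      show (n + 1 : ℝ) * θ - x * Real.sin θ = (n * θ - x * Real.sin θ) + θ by ring,
      Real.cos_sub _ θ, Real.cos_add _ θ]
    ring
  rw [hsplit, mul_eq_zero_iff_left pi_ne_zero] at hftc
  linarith

lemma besselJ_neg : besselJ (-n) x = (-1) ^ n * besselJ n x := by
  have hreflect := intervalIntegral.integral_comp_sub_left (a := 0) (b := π)
    (fun θ => Real.cos ((-n : ℤ) * θ - x * Real.sin θ)) π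
  rw [sub_self, sub_zero] at hreflect
  rw [besselJ, ← hreflect, besselJ, mul_left_comm,
    ← intervalIntegral.integral_const_mul ((-1 : ℝ) ^ n)]
  congr 2 with θ
  rw [Real.sin_pi_sub, ← Real.cos_sub_int_mul_pi]
  push_cast
  ring_nf

@[simp]
lemma besselJ_zero_zero : besselJ 0 0 = 1 := by
  simp [besselJ, pi_ne_zero]

variable {n} in
lemma besselJ_apply_zero (hn : n ≠ 0) : besselJ n 0 = 0 := by
  simpa [hn] using mul_besselJ_pred_add_succ n 0

lemma hasDerivAt_besselJ_zero : HasDerivAt (besselJ 0) (-besselJ 1 x) x := by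
  refine (hasDerivAt_besselJ 0 x).congr_deriv ?_
  rw [zero_sub, zero_add, besselJ_neg, zpow_one]
  ring

variable {x} in
lemma hasDerivAt_besselJ_one (hx : x ≠ 0) :
    HasDerivAt (besselJ 1) (besselJ 0 x - besselJ 1 x / x) x := by
  refine (hasDerivAt_besselJ 1 x).congr_deriv ?_
  have hrec := mul_besselJ_pred_add_succ 1 x
  rw [sub_self, Int.cast_one] at *
  field_simp
  linear_combination -hrec

lemma mul_deriv_besselJ :
    x * deriv (besselJ n) x = n * besselJ n x - x * besselJ (n + 1) x := by
  rw [(hasDerivAt_besselJ n x).deriv]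
  linear_combination mul_besselJ_pred_add_succ n x / 2

lemma hasDerivAt_id_mul_besselJ_succ :
    HasDerivAt (fun y => y * besselJ (n + 1) y) (x * besselJ n x - n * besselJ (n + 1) x) x := by
  refine ((hasDerivAt_id x).mul (hasDerivAt_besselJ (n + 1) x)).congr_deriv ?_
  have hrec := mul_besselJ_pred_add_succ (n + 1) x
  push_cast at hrec
  rw [add_sub_cancel_right] at hrec ⊢
  simp only [id]
  linear_combination -hrec / 2

lemma lommel_integral_besselJ (a b T : ℝ) :
    (b ^ 2 - a ^ 2) * ∫ t in (0:ℝ)..T, besselJ n (a * t) * besselJ n (b * t) * t =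
      T * (b * besselJ (n + 1) (b * T) * besselJ n (a * T) -
        a * besselJ n (b * T) * besselJ (n + 1) (a * T)) := by
  rw [← intervalIntegral.integral_const_mul, intervalIntegral.integral_eq_sub_of_hasDerivAt
    (f := fun t => b * t * besselJ (n + 1) (b * t) * besselJ n (a * t) -
      a * t * besselJ (n + 1) (a * t) * besselJ n (b * t)) (fun t _ => ?_)
    (Continuous.intervalIntegrable (by fun_prop) _ _)]
  · ring
  have hJ (c : ℝ) : HasDerivAt (fun t => besselJ n (c * t)) _ t :=
    (hasDerivAt_besselJ n (c * t)).differentiableAt.hasDerivAt.scomp t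
      ((hasDerivAt_id t).const_mul c)
  have hJsucc (c : ℝ) : HasDerivAt (fun t => c * t * besselJ (n + 1) (c * t)) _ t :=
    (hasDerivAt_id_mul_besselJ_succ n (c * t)).scomp t ((hasDerivAt_id t).const_mul c)
  refine (((hJsucc b).mul (hJ a)).sub ((hJsucc a).mul (hJ b))).congr_deriv ?_
  simp only [smul_eq_mul, mul_one]
  linear_combination b * besselJ (n + 1) (b * t) * mul_deriv_besselJ n (a * t) -
    a * besselJ (n + 1) (a * t) * mul_deriv_besselJ n (b * t)

end BesselJ

section Decay

-- The two lower-order terms are chosen to make the energy `x (J₀² + J₁²)` nonincreasing.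
lemma hasDerivAt_besselJ_energy {x : ℝ} (hx : x ≠ 0) :
    HasDerivAt (fun y => y * (besselJ 0 y ^ 2 + besselJ 1 y ^ 2) - besselJ 0 y * besselJ 1 y +
      besselJ 0 y ^ 2 / (2 * y)) (-(besselJ 0 x ^ 2 / (2 * x ^ 2))) x := by
  have h0 := hasDerivAt_besselJ_zero x
  have h1 := hasDerivAt_besselJ_one hx
  refine ((((hasDerivAt_id x).mul ((h0.pow 2).add (h1.pow 2))).sub (h0.mul h1)).add
    ((h0.pow 2).div ((hasDerivAt_id x).const_mul 2) (by simpa using hx))).congr_deriv ?_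
  simp
  field_simp
  ring

lemma mul_besselJ_zero_sq_add_besselJ_one_sq_le (x : ℝ) :
    x * (besselJ 0 x ^ 2 + besselJ 1 x ^ 2) ≤ 5 := by
  have hsq (n : ℤ) (y : ℝ) : besselJ n y ^ 2 ≤ 1 :=
    (sq_le_one_iff_abs_le_one _).2 (abs_besselJ_le_one n y)
  rcases le_total x 1 with hx1 | hx1
  · nlinarith [hsq 0 x, hsq 1 x, sq_nonneg (besselJ 0 x), sq_nonneg (besselJ 1 x)]
  have hanti := antitoneOn_of_hasDerivWithinAt_nonpos (convex_Ici (1 : ℝ))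
    (fun y hy => (hasDerivAt_besselJ_energy
      (zero_lt_one.trans_le hy).ne').continuousAt.continuousWithinAt)
    (fun y hy => (hasDerivAt_besselJ_energy
      (zero_lt_one.trans_le (interior_subset hy)).ne').hasDerivWithinAt)
    (fun y _ => neg_nonpos.2 (by positivity))
  have henergy := hanti Set.self_mem_Ici hx1 hx1
  have hpos : 0 ≤ besselJ 0 x ^ 2 / (2 * x) := by positivity
  dsimp only at henergy
  nlinarith [hsq 0 x, hsq 1 x, hsq 0 1, hsq 1 1, sq_nonneg (besselJ 0 x - besselJ 1 x),
    sq_nonneg (besselJ 0 1 + besselJ 1 1)]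

lemma exists_sqrt_mul_abs_besselJ_le (n : ℕ) :
    ∃ C, ∀ x, 0 ≤ x → √x * |besselJ n x| ≤ C := by
  induction n using Nat.twoStepInduction with
  | zero =>
    refine ⟨√5, fun x hx => Real.le_sqrt_of_sq_le ?_⟩
    rw [mul_pow, sq_sqrt hx, sq_abs]
    exact le_trans (by gcongr; simpa using sq_nonneg _)
      (mul_besselJ_zero_sq_add_besselJ_one_sq_le x)
  | one =>
    refine ⟨√5, fun x hx => Real.le_sqrt_of_sq_le ?_⟩
    rw [mul_pow, sq_sqrt hx, sq_abs]
    exact le_trans (by gcongr; simpa using sq_nonneg _)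
      (mul_besselJ_zero_sq_add_besselJ_one_sq_le x)
  | more n ih₀ ih₁ =>
    obtain ⟨C₀, hC₀⟩ := ih₀
    obtain ⟨C₁, hC₁⟩ := ih₁
    refine ⟨max 1 (2 * (n + 1) * C₁ + C₀), fun x hx => ?_⟩
    rcases le_total x 1 with hx1 | hx1
    · exact (mul_le_one₀ (Real.sqrt_le_one.2 hx1) (abs_nonneg _)
        (abs_besselJ_le_one _ x)).trans (le_max_left _ _)
    have hrec : besselJ (n + 2 : ℕ) x =
        2 * (n + 1) / x * besselJ (n + 1 : ℕ) x - besselJ n x := by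
      have := mul_besselJ_pred_add_succ (n + 1) x
      push_cast at this ⊢
      rw [add_sub_cancel_right, show (n : ℤ) + 1 + 1 = n + 2 by ring] at this
      field_simp
      linear_combination this
    calc √x * |besselJ (n + 2 : ℕ) x|
        ≤ √x * (|2 * (n + 1) / x * besselJ (n + 1 : ℕ) x| + |besselJ n x|) := by
          rw [hrec]; gcongr; exact abs_sub _ _
      _ = 2 * (n + 1) / x * (√x * |besselJ (n + 1 : ℕ) x|) + √x * |besselJ n x| := by
          rw [abs_mul, abs_of_nonneg (by positivity)]; ring
      _ ≤ 2 * (n + 1) * C₁ + C₀ := by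
          gcongr
          · exact div_le_self (by positivity) hx1
          · exact hC₁ x hx
          · exact hC₀ x hx
      _ ≤ _ := le_max_right _ _

lemma exists_abs_sqrt_mul_besselJ_mul_le (n : ℕ) :
    ∃ C, ∀ r T : ℝ, 0 < r → 0 ≤ T → |√T * besselJ n (r * T)| ≤ C * (√r)⁻¹ := by
  obtain ⟨C, hC⟩ := exists_sqrt_mul_abs_besselJ_le n
  refine ⟨C, fun r T hr hT => ?_⟩
  have := hC (r * T) (by positivity)
  rwa [← div_eq_mul_inv, le_div_iff₀ (Real.sqrt_pos.2 hr), abs_mul, abs_of_nonneg (sqrt_nonneg T),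
    mul_right_comm, mul_comm √T, ← Real.sqrt_mul hr.le]

lemma isBoundedUnder_sqrt_mul_besselJ (n : ℕ) {a : ℝ} (ha : 0 < a) :
    IsBoundedUnder (· ≤ ·) atTop (norm ∘ fun T : ℝ => √T * besselJ n (a * T)) := by
  obtain ⟨C, hC⟩ := exists_abs_sqrt_mul_besselJ_mul_le n
  exact isBoundedUnder_of_eventually_le <| (eventually_ge_atTop 0).mono fun T hT => hC a T ha hT

lemma tendsto_besselJ_mul_atTop (n : ℕ) {a : ℝ} (ha : 0 < a) :
    Tendsto (fun T : ℝ => besselJ n (a * T)) atTop (𝓝 0) := by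
  refine ((tendsto_inv_atTop_zero.comp Real.tendsto_sqrt_atTop).zero_mul_isBoundedUnder_le
    (isBoundedUnder_sqrt_mul_besselJ n ha)).congr' ?_
  filter_upwards [eventually_gt_atTop 0] with T hT
  exact inv_mul_cancel_left₀ (Real.sqrt_pos.2 hT).ne' _

end Decay

section ThirdSide

/-- The third side of a triangle with sides `p` and `q` enclosing the angle `φ`,
as given by the law of cosines. -/
noncomputable def thirdSide (p q φ : ℝ) : ℝ :=
  √(p ^ 2 + q ^ 2 - 2 * p * q * Real.cos φ)

@[fun_prop]
lemma continuous_thirdSide (p q : ℝ) : Continuous (thirdSide p q) := by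
  unfold thirdSide
  fun_prop

lemma thirdSide_nonneg (p q φ : ℝ) : 0 ≤ thirdSide p q φ :=
  Real.sqrt_nonneg _

lemma thirdSide_sq (p q φ : ℝ) :
    thirdSide p q φ ^ 2 = p ^ 2 + q ^ 2 - 2 * p * q * Real.cos φ := by
  refine sq_sqrt ?_
  nlinarith [Real.sin_sq_add_cos_sq φ, sq_nonneg (p - q * Real.cos φ),
    sq_nonneg (q * Real.sin φ)]

@[simp]
lemma thirdSide_zero (p q : ℝ) : thirdSide p q 0 = |p - q| := by
  rw [thirdSide, ← Real.sqrt_sq_eq_abs, Real.cos_zero]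
  ring_nf

@[simp]
lemma thirdSide_two_pi_sub (p q φ : ℝ) : thirdSide p q (2 * π - φ) = thirdSide p q φ := by
  rw [thirdSide, Real.cos_two_pi_sub, thirdSide]

lemma thirdSide_mul_right (p q φ : ℝ) {c : ℝ} (hc : 0 ≤ c) :
    thirdSide (p * c) (q * c) φ = thirdSide p q φ * c := by
  rw [thirdSide, thirdSide, ← Real.sqrt_mul_self hc, ← Real.sqrt_mul' _ (by positivity),
    Real.sqrt_mul_self hc]
  ring_nf

lemma exists_mul_sin_sub_mul_sin_eq_thirdSide_mul_sin (p q φ : ℝ) :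
    ∃ δ, ∀ β, p * Real.sin (β + φ) - q * Real.sin β = thirdSide p q φ * Real.sin (δ + β) := by
  let z : ℂ := ⟨p * Real.cos φ - q, p * Real.sin φ⟩
  have hz : ‖z‖ = thirdSide p q φ := by
    rw [Complex.norm_eq_sqrt_sq_add_sq, thirdSide]
    congr 1
    linear_combination p ^ 2 * Real.sin_sq_add_cos_sq φ
  refine ⟨Complex.arg z, fun β => ?_⟩
  rw [← hz, Real.sin_add, Real.sin_add]
  linear_combination -Real.sin β * Complex.norm_mul_cos_arg z -
    Real.cos β * Complex.norm_mul_sin_arg z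

lemma hasDerivAt_thirdSide_sq (p q φ : ℝ) :
    HasDerivAt (fun φ => thirdSide p q φ ^ 2) (2 * p * q * Real.sin φ) φ := by
  simp only [thirdSide_sq]
  refine (((Real.hasDerivAt_cos φ).const_mul (2 * p * q)).const_sub _).congr_deriv ?_
  ring

variable {p q : ℝ}

@[simp]
lemma thirdSide_pi (hp : 0 < p) (hq : 0 < q) : thirdSide p q π = p + q := by
  rw [thirdSide, Real.cos_pi, ← Real.sqrt_sq (add_pos hp hq).le]
  ring_nf

lemma strictMonoOn_thirdSide (hp : 0 < p) (hq : 0 < q) :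
    StrictMonoOn (thirdSide p q) (Set.Icc 0 π) := by
  intro x hx y hy hxy
  refine lt_of_pow_lt_pow_left₀ 2 (thirdSide_nonneg _ _ _) ?_
  rw [thirdSide_sq, thirdSide_sq]
  gcongr
  exact Real.strictAntiOn_cos hx hy hxy

lemma thirdSide_pos (hp : 0 < p) (hq : 0 < q) {φ : ℝ} (hφ : φ ∈ Set.Ioc 0 π) :
    0 < thirdSide p q φ :=
  (thirdSide_nonneg p q 0).trans_lt
    (strictMonoOn_thirdSide hp hq ⟨le_rfl, pi_pos.le⟩ ⟨hφ.1.le, hφ.2⟩ hφ.1)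

lemma thirdSide_mem_Ioo (hp : 0 < p) (hq : 0 < q) {φ : ℝ} (hφ : φ ∈ Set.Ioo 0 π) :
    thirdSide p q φ ∈ Set.Ioo |p - q| (p + q) := by
  have hφ' : φ ∈ Set.Icc 0 π := Set.Ioo_subset_Icc_self hφ
  rw [← thirdSide_zero, ← thirdSide_pi hp hq]
  exact ⟨strictMonoOn_thirdSide hp hq ⟨le_rfl, pi_pos.le⟩ hφ' hφ.1,
    strictMonoOn_thirdSide hp hq hφ' ⟨pi_pos.le, le_rfl⟩ hφ.2⟩

lemma hasDerivAt_thirdSide {φ : ℝ} (hφ : thirdSide p q φ ≠ 0) :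
    HasDerivAt (thirdSide p q) (p * q * Real.sin φ / thirdSide p q φ) φ := by
  have hsqrt := (hasDerivAt_thirdSide_sq p q φ).sqrt (pow_ne_zero 2 hφ)
  simp only [Real.sqrt_sq (thirdSide_nonneg p q _)] at hsqrt
  refine hsqrt.congr_deriv ?_
  field_simp

lemma two_mul_sqrt_div_pi_mul_le_thirdSide (hp : 0 < p) (hq : 0 < q) {φ : ℝ}
    (hφ : φ ∈ Set.Icc 0 π) :
    2 * √(p * q) / π * φ ≤ thirdSide p q φ := by
  refine Real.le_sqrt_of_sq_le ?_
  have hcos : Real.cos φ ≤ 1 - 2 / π ^ 2 * φ ^ 2 :=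
    Real.cos_le_one_sub_mul_cos_sq (abs_le.2 ⟨by linarith [hφ.1, pi_pos], hφ.2⟩)
  have hpq : 0 < p * q := mul_pos hp hq
  calc (2 * √(p * q) / π * φ) ^ 2
      = 2 * (p * q) * (2 / π ^ 2 * φ ^ 2) := by
        rw [mul_pow, div_pow, mul_pow, Real.sq_sqrt hpq.le]
        ring
    _ ≤ 2 * (p * q) * (1 - Real.cos φ) := by gcongr; linarith
    _ ≤ p ^ 2 + q ^ 2 - 2 * p * q * Real.cos φ := by linarith [sq_nonneg (p - q)]

lemma intervalIntegrable_inv_sqrt_thirdSide (hp : 0 < p) (hq : 0 < q) :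
    IntervalIntegrable (fun φ => (√(thirdSide p q φ))⁻¹) volume 0 π := by
  have hpow : IntervalIntegrable
      (fun φ : ℝ => (√(2 * √(p * q) / π))⁻¹ * φ ^ (-(1 / 2) : ℝ)) volume 0 π :=
    (intervalIntegral.intervalIntegrable_rpow' (by norm_num)).const_mul _
  refine hpow.mono_fun' (Measurable.aestronglyMeasurable (by fun_prop)) ?_
  rw [Set.uIoc_of_le pi_pos.le]
  filter_upwards [ae_restrict_mem measurableSet_Ioc] with φ hφ
  have hc : 0 < 2 * √(p * q) / π := by positivity
  rw [Real.norm_of_nonneg (by positivity), Real.rpow_neg hφ.1.le, ← Real.sqrt_eq_rpow, ← mul_inv,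
    ← Real.sqrt_mul hc.le]
  have := hφ.1
  gcongr
  exact two_mul_sqrt_div_pi_mul_le_thirdSide hp hq ⟨hφ.1.le, hφ.2⟩

end ThirdSide

section ProductFormula

lemma cexp_I_mul_add_cexp_I_mul_reflect (n : ℤ) (s : ℝ) :
    cexp (I * s) + cexp (I * (n * (2 * π) - s : ℝ)) = (2 * Real.cos s : ℝ) := by
  have hphase : I * (n * (2 * π) - s : ℝ) = -(s : ℂ) * I + n * (2 * π * I) := by
    push_cast
    ring
  rw [hphase, Complex.exp_add, Complex.exp_int_mul_two_pi_mul_I, mul_one, mul_comm I,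
    ← Complex.two_cos]
  push_cast
  rfl

lemma integral_cexp_eq_besselJ (n : ℤ) (x : ℝ) :
    ∫ θ in (0:ℝ)..2 * π, cexp (I * (n * θ - x * Real.sin θ : ℝ)) = 2 * π * besselJ n x := by
  have hreflect (θ : ℝ) : n * (2 * π - θ) - x * Real.sin (2 * π - θ) =
      n * (2 * π) - (n * θ - x * Real.sin θ) := by
    rw [Real.sin_two_pi_sub]
    ring
  rw [integral_zero_two_mul_eq_integral_add_reflect (by fun_prop)]
  simp_rw [hreflect, cexp_I_mul_add_cexp_I_mul_reflect]
  rw [intervalIntegral.integral_ofReal, intervalIntegral.integral_const_mul, besselJ]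
  push_cast
  field_simp

lemma integral_cexp_mul_besselJ_zero_thirdSide (n : ℤ) (x y : ℝ) :
    ∫ φ in (0:ℝ)..2 * π, cexp (I * (n * φ : ℝ)) * besselJ 0 (thirdSide x y φ) =
      2 * ∫ φ in (0:ℝ)..π, Real.cos (n * φ) * besselJ 0 (thirdSide x y φ) := by
  rw [integral_zero_two_mul_eq_integral_add_reflect (by fun_prop)]
  simp_rw [thirdSide_two_pi_sub, mul_sub, ← add_mul, cexp_I_mul_add_cexp_I_mul_reflect,
    ← ofReal_mul, mul_assoc]
  rw [intervalIntegral.integral_ofReal, intervalIntegral.integral_const_mul, ofReal_mul]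
  rfl

lemma besselJ_neg_neg (n : ℤ) (x : ℝ) : besselJ (-n) (-x) = besselJ n x := by
  rw [besselJ, besselJ]
  congr 2 with θ
  rw [← Real.cos_neg]
  push_cast
  ring_nf

lemma integral_cexp_sub_eq_cexp_mul_besselJ_zero_thirdSide (n : ℤ) (x y φ : ℝ) :
    ∫ β in (0:ℝ)..2 * π, cexp (I * (n * φ - (x * Real.sin (β + φ) - y * Real.sin β) : ℝ)) =
      2 * π * (cexp (I * (n * φ : ℝ)) * besselJ 0 (thirdSide x y φ)) := by
  obtain ⟨δ, hδ⟩ := exists_mul_sin_sub_mul_sin_eq_thirdSide_mul_sin x y φ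
  have hper : Function.Periodic
      (fun β : ℝ => cexp (I * ((0 : ℤ) * β - thirdSide x y φ * Real.sin β : ℝ))) (2 * π) := by
    intro β
    simp only [Int.cast_zero, zero_mul, Real.sin_add_two_pi]
  calc _ = ∫ β in (0:ℝ)..2 * π, cexp (I * (n * φ : ℝ)) *
        cexp (I * ((0 : ℤ) * (δ + β) - thirdSide x y φ * Real.sin (δ + β) : ℝ)) := by
        congr 1 with β
        rw [hδ, ← Complex.exp_add]
        push_cast
        ring_nf
    _ = _ := by
        rw [intervalIntegral.integral_const_mul,
          intervalIntegral_comp_add_left_of_periodic hper δ, integral_cexp_eq_besselJ]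
        ring

lemma integral_cexp_mul_cexp_eq_integral_cexp_shift (n : ℤ) (x y β : ℝ) :
    (∫ α in (0:ℝ)..2 * π, cexp (I * (n * α - x * Real.sin α : ℝ))) *
        cexp (I * ((-n : ℤ) * β - (-y) * Real.sin β : ℝ)) =
      ∫ φ in (0:ℝ)..2 * π,
        cexp (I * (n * φ - (x * Real.sin (β + φ) - y * Real.sin β) : ℝ)) := by
  have hper : Function.Periodic (fun α : ℝ =>
      cexp (I * (n * (α - β) - (x * Real.sin α - y * Real.sin β) : ℝ))) (2 * π) := by
    intro α
    refine Complex.exp_eq_exp_iff_exists_int.2 ⟨n, ?_⟩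
    rw [Real.sin_add_two_pi]
    push_cast
    ring
  rw [← intervalIntegral.integral_mul_const]
  simp_rw [← Complex.exp_add]
  refine Eq.trans ?_ ((intervalIntegral_comp_add_left_of_periodic hper β).symm.trans ?_) <;>
  · congr 1 with α
    push_cast
    ring_nf

lemma besselJ_mul_besselJ_eq_integral (n : ℤ) (x y : ℝ) :
    besselJ n x * besselJ n y =
      (1 / π) * ∫ φ in (0:ℝ)..π, Real.cos (n * φ) * besselJ 0 (thirdSide x y φ) := by
  have hfull : (2 * π * besselJ n x : ℂ) * (2 * π * besselJ n y) =
      2 * π * (2 * ∫ φ in (0:ℝ)..π, Real.cos (n * φ) * besselJ 0 (thirdSide x y φ) : ℝ) := by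
    calc _ = ∫ β in (0:ℝ)..2 * π, ∫ φ in (0:ℝ)..2 * π,
          cexp (I * (n * φ - (x * Real.sin (β + φ) - y * Real.sin β) : ℝ)) := by
          simp_rw [← integral_cexp_mul_cexp_eq_integral_cexp_shift]
          rw [intervalIntegral.integral_const_mul, integral_cexp_eq_besselJ,
            integral_cexp_eq_besselJ, besselJ_neg_neg]
      _ = _ := by
          rw [integral_integral_swap_of_continuous (by unfold Function.uncurry; fun_prop)]
          simp_rw [integral_cexp_sub_eq_cexp_mul_besselJ_zero_thirdSide]
          rw [intervalIntegral.integral_const_mul, integral_cexp_mul_besselJ_zero_thirdSide]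
          push_cast
          rfl
  have hreal : 2 * π * besselJ n x * (2 * π * besselJ n y) =
      2 * π * (2 * ∫ φ in (0:ℝ)..π, Real.cos (n * φ) * besselJ 0 (thirdSide x y φ)) := by
    exact_mod_cast hfull
  rw [one_div, eq_inv_mul_iff_mul_eq₀ pi_ne_zero]
  refine mul_left_cancel₀ (by positivity : 4 * π ≠ 0) ?_
  linear_combination hreal

end ProductFormula

section Approximation

variable {ι : Type*} {l : Filter ι} {a b : ℝ} {w : ℝ → ℝ} {Φ : ι → ℝ → ℝ}

lemma tendsto_integral_mul_zero_of_forall_approx (hab : a ≤ b)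
    (hw : IntervalIntegrable w volume a b) (hΦ : ∀ i, Continuous (Φ i))
    (hΦw : ∀ᶠ i in l, ∀ x ∈ Set.Ioc a b, |Φ i x| ≤ w x) {h : ℝ → ℝ} (hh : Continuous h)
    (happrox : ∀ ε > 0, ∃ g : ℝ → ℝ, Continuous g ∧ ∫ x in a..b, |h x - g x| * |w x| < ε ∧
      Tendsto (fun i => ∫ x in a..b, g x * Φ i x) l (𝓝 0)) :
    Tendsto (fun i => ∫ x in a..b, h x * Φ i x) l (𝓝 0) := by
  refine Metric.tendsto_nhds.2 fun ε hε => ?_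
  obtain ⟨g, hg, hdist, hlim⟩ := happrox (ε / 2) (half_pos hε)
  filter_upwards [Metric.tendsto_nhds.1 hlim (ε / 2) (half_pos hε), hΦw] with i hi hbound
  rw [dist_zero_right] at hi ⊢
  have hdiff : ‖∫ x in a..b, (h x - g x) * Φ i x‖ ≤ ∫ x in a..b, |h x - g x| * |w x| := by
    refine intervalIntegral.norm_integral_le_of_norm_le hab (.of_forall fun x hx => ?_)
      (hw.abs.continuousOn_mul (by fun_prop))
    rw [norm_mul, Real.norm_eq_abs, Real.norm_eq_abs]
    exact mul_le_mul_of_nonneg_left ((hbound x hx).trans (le_abs_self _)) (abs_nonneg _)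
  have hsplit : ∫ x in a..b, h x * Φ i x =
      (∫ x in a..b, (h x - g x) * Φ i x) + ∫ x in a..b, g x * Φ i x := by
    rw [← intervalIntegral.integral_add (Continuous.intervalIntegrable (by fun_prop) _ _)
      (Continuous.intervalIntegrable (by fun_prop) _ _)]
    congr 1 with x
    ring
  rw [hsplit]
  linarith [norm_add_le (∫ x in a..b, (h x - g x) * Φ i x) (∫ x in a..b, g x * Φ i x)]

lemma tendsto_integral_mul_zero_of_forall_polynomial (hab : a ≤ b)
    (hw : IntervalIntegrable w volume a b) (hΦ : ∀ i, Continuous (Φ i))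
    (hΦw : ∀ᶠ i in l, ∀ x ∈ Set.Ioc a b, |Φ i x| ≤ w x) {s u : ℝ → ℝ} (hs : Continuous s)
    (hu : Continuous u)
    (hpoly : ∀ Q : Polynomial ℝ,
      Tendsto (fun i => ∫ x in a..b, s x * Q.eval x * Φ i x) l (𝓝 0)) :
    Tendsto (fun i => ∫ x in a..b, s x * u x * Φ i x) l (𝓝 0) := by
  refine tendsto_integral_mul_zero_of_forall_approx hab hw hΦ hΦw (by fun_prop) fun ε hε => ?_
  have hint : IntervalIntegrable (fun x => |s x| * |w x|) volume a b :=
    hw.abs.continuousOn_mul (by fun_prop)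
  set M := ∫ x in a..b, |s x| * |w x|
  have hM : 0 ≤ M := intervalIntegral.integral_nonneg hab fun x _ => by positivity
  obtain ⟨Q, hQ⟩ := exists_polynomial_near_of_continuousOn a b u hu.continuousOn
    (ε / (M + 1)) (by positivity)
  refine ⟨fun x => s x * Q.eval x, by fun_prop, ?_, hpoly Q⟩
  calc ∫ x in a..b, |s x * u x - s x * Q.eval x| * |w x|
      ≤ ∫ x in a..b, ε / (M + 1) * (|s x| * |w x|) := by
        refine intervalIntegral.integral_mono_on hab (hw.abs.continuousOn_mul (by fun_prop))
          (hint.const_mul _) fun x hx => ?_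
        rw [← mul_sub, abs_mul, abs_sub_comm, mul_comm |s x|, mul_assoc]
        gcongr
        exact (hQ x hx).le
    _ = ε * (M / (M + 1)) := by rw [intervalIntegral.integral_const_mul]; ring
    _ < ε := mul_lt_of_lt_one_right hε ((div_lt_one (by positivity)).2 (lt_add_one M))

lemma tendsto_integral_abs_inv_one_add_mul_sq_mul (hab : a ≤ b)
    (hw : IntervalIntegrable w volume a b) {s h : ℝ → ℝ} (hs : Continuous s)
    (hh : Continuous h) (hs0 : ∀ x ∈ Set.Ioo a b, s x ≠ 0) :
    Tendsto (fun k : ℕ => ∫ x in a..b, |(1 + k * s x ^ 2)⁻¹ * h x| * |w x|) atTop (𝓝 0) := by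
  have hden (k : ℕ) (x : ℝ) : 0 < 1 + k * s x ^ 2 := by positivity
  have hdom := intervalIntegral.tendsto_integral_filter_of_dominated_convergence
    (μ := volume) (a := a) (b := b) (l := atTop) (f := fun _ => (0 : ℝ))
    (F := fun (k : ℕ) x => |(1 + k * s x ^ 2)⁻¹ * h x| * |w x|) (fun x => |h x| * |w x|)
    (.of_forall fun k => ?_) (.of_forall fun k => .of_forall fun x _ => ?_)
    (hw.abs.continuousOn_mul (by fun_prop)) ?_
  · simpa using hdom
  · have hcont : Continuous fun x => |(1 + k * s x ^ 2)⁻¹ * h x| := by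
      fun_prop (disch := exact fun x => (hden k x).ne')
    exact (hw.abs.continuousOn_mul hcont.continuousOn).def'.aestronglyMeasurable
  · rw [norm_mul, norm_abs_eq_norm, norm_abs_eq_norm, norm_mul, Real.norm_eq_abs (h x),
      Real.norm_eq_abs (w x), norm_inv, Real.norm_of_nonneg (hden k x).le]
    gcongr
    exact mul_le_of_le_one_left (abs_nonneg _)
      (inv_le_one_of_one_le₀ (le_add_of_nonneg_right (by positivity)))
  · rw [Set.uIoc_of_le hab]
    filter_upwards [(Set.countable_singleton b).ae_notMem volume] with x hxb hx
    have hsx := hs0 x ⟨hx.1, lt_of_le_of_ne hx.2 hxb⟩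
    have hdiv : Tendsto (fun k : ℕ => 1 + k * s x ^ 2) atTop atTop :=
      tendsto_atTop_add_const_left _ _
        (tendsto_natCast_atTop_atTop.atTop_mul_const (by positivity))
    simpa using ((hdiv.inv_tendsto_atTop.mul_const (h x)).abs).mul_const |w x|

lemma tendsto_integral_mul_zero_of_ne_zero (hab : a ≤ b)
    (hw : IntervalIntegrable w volume a b) (hΦ : ∀ i, Continuous (Φ i))
    (hΦw : ∀ᶠ i in l, ∀ x ∈ Set.Ioc a b, |Φ i x| ≤ w x) {s h : ℝ → ℝ} (hs : Continuous s)
    (hh : Continuous h) (hs0 : ∀ x ∈ Set.Ioo a b, s x ≠ 0)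
    (hmul : ∀ u : ℝ → ℝ, Continuous u →
      Tendsto (fun i => ∫ x in a..b, s x * u x * Φ i x) l (𝓝 0)) :
    Tendsto (fun i => ∫ x in a..b, h x * Φ i x) l (𝓝 0) := by
  refine tendsto_integral_mul_zero_of_forall_approx hab hw hΦ hΦw hh fun ε hε => ?_
  obtain ⟨k, hk⟩ := ((tendsto_integral_abs_inv_one_add_mul_sq_mul hab hw hs hh
    hs0).eventually (gt_mem_nhds hε)).exists
  have hden (x : ℝ) : 1 + k * s x ^ 2 ≠ 0 := by positivity
  have hu : Continuous fun x => k * s x * h x / (1 + k * s x ^ 2) := by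
    fun_prop (disch := exact hden)
  have hsub (x : ℝ) :
      h x - s x * (k * s x * h x / (1 + k * s x ^ 2)) = (1 + k * s x ^ 2)⁻¹ * h x := by
    have := hden x
    field_simp
    ring
  exact ⟨fun x => s x * (k * s x * h x / (1 + k * s x ^ 2)), by fun_prop,
    by simpa only [hsub] using hk, hmul _ hu⟩

end Approximation

section Oscillation

lemma hasDerivAt_pow_mul_besselJ_succ (n : ℕ) (T r : ℝ) :
    HasDerivAt (fun r => r ^ (n + 1) * besselJ (n + 1) (r * T))
      (T * r ^ (n + 1) * besselJ n (r * T)) r := by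
  have hJ := (hasDerivAt_besselJ (n + 1) (r * T)).scomp r ((hasDerivAt_id r).mul_const T)
  refine ((hasDerivAt_pow (n + 1) r).mul hJ).congr_deriv ?_
  have hrec := mul_besselJ_pred_add_succ (n + 1) (r * T)
  push_cast [smul_eq_mul] at hrec ⊢
  rw [add_sub_cancel_right] at hrec ⊢
  simp only [Function.comp_apply, id]
  linear_combination -r ^ n * hrec / 2

variable {p q : ℝ}

lemma hasDerivAt_thirdSide_pow_mul_besselJ_succ (n : ℕ) (T : ℝ) {φ : ℝ}
    (hφ : thirdSide p q φ ≠ 0) :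
    HasDerivAt (fun φ => thirdSide p q φ ^ (n + 1) * besselJ (n + 1) (thirdSide p q φ * T))
      (p * q * T * (Real.sin φ * thirdSide p q φ ^ n * besselJ n (thirdSide p q φ * T))) φ := by
  refine ((hasDerivAt_pow_mul_besselJ_succ n T _).comp φ (hasDerivAt_thirdSide hφ)).congr_deriv ?_
  field_simp
  ring

lemma mul_integral_sin_mul_besselJ_thirdSide (hp : 0 < p) (hq : 0 < q) (n : ℕ) (T : ℝ)
    {u u' : ℝ → ℝ} (hu : ∀ φ, HasDerivAt u (u' φ) φ) (hu' : Continuous u') :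
    p * q * T * ∫ φ in (0:ℝ)..π,
        Real.sin φ * thirdSide p q φ ^ n * u φ * besselJ n (thirdSide p q φ * T) =
      (p + q) ^ (n + 1) * besselJ (n + 1) ((p + q) * T) * u π -
        |p - q| ^ (n + 1) * besselJ (n + 1) (|p - q| * T) * u 0 -
        ∫ φ in (0:ℝ)..π,
          u' φ * (thirdSide p q φ ^ (n + 1) * besselJ (n + 1) (thirdSide p q φ * T)) := by
  have hucont : Continuous u := continuous_iff_continuousAt.2 fun φ => (hu φ).continuousAt
  have hparts := intervalIntegral.integral_eq_sub_of_hasDerivAt_of_le pi_pos.le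
    (f := fun φ => thirdSide p q φ ^ (n + 1) * besselJ (n + 1) (thirdSide p q φ * T) * u φ)
    (by fun_prop)
    (fun φ hφ => (hasDerivAt_thirdSide_pow_mul_besselJ_succ n T
      (thirdSide_pos hp hq ⟨hφ.1, hφ.2.le⟩).ne').mul (hu φ))
    (Continuous.intervalIntegrable (by fun_prop) _ _)
  rw [thirdSide_pi hp hq, thirdSide_zero, intervalIntegral.integral_add
    (Continuous.intervalIntegrable (by fun_prop) _ _)
    (Continuous.intervalIntegrable (by fun_prop) _ _)] at hparts
  rw [← hparts, ← intervalIntegral.integral_const_mul, eq_sub_iff_add_eq]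
  congr 2 with φ
  · ring
  · ring

lemma exists_abs_mul_integral_sin_mul_besselJ_thirdSide_le (hp : 0 < p) (hq : 0 < q) (n : ℕ)
    {u u' : ℝ → ℝ} (hu : ∀ φ, HasDerivAt u (u' φ) φ) (hu' : Continuous u') :
    ∃ C, ∀ T : ℝ, |p * q * T * ∫ φ in (0:ℝ)..π,
      Real.sin φ * thirdSide p q φ ^ n * u φ * besselJ n (thirdSide p q φ * T)| ≤ C := by
  have hbound (c r T : ℝ) : |r ^ (n + 1) * besselJ (n + 1) (r * T) * c| ≤ |r ^ (n + 1) * c| := by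
    rw [mul_right_comm, abs_mul]
    exact mul_le_of_le_one_right (abs_nonneg _) (abs_besselJ_le_one _ _)
  refine ⟨|(p + q) ^ (n + 1) * u π| + abs (|p - q| ^ (n + 1) * u 0) +
    ∫ φ in (0:ℝ)..π, |thirdSide p q φ ^ (n + 1) * u' φ|, fun T => ?_⟩
  rw [mul_integral_sin_mul_besselJ_thirdSide hp hq n T hu hu']
  refine (abs_sub _ _).trans (add_le_add ((abs_sub _ _).trans
    (add_le_add (hbound _ _ _) (hbound _ _ _))) ?_)
  rw [← Real.norm_eq_abs]
  refine intervalIntegral.norm_integral_le_of_norm_le pi_pos.le (.of_forall fun φ _ => ?_) ?_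
  · rw [mul_comm (u' φ)]
    exact hbound _ _ _
  · exact Continuous.intervalIntegrable (by fun_prop) _ _

lemma tendsto_integral_sin_mul_sqrt_mul_besselJ_thirdSide (hp : 0 < p) (hq : 0 < q) (n : ℕ)
    {u u' : ℝ → ℝ} (hu : ∀ φ, HasDerivAt u (u' φ) φ) (hu' : Continuous u') :
    Tendsto (fun T : ℝ => ∫ φ in (0:ℝ)..π,
      Real.sin φ * thirdSide p q φ ^ n * u φ * (√T * besselJ n (thirdSide p q φ * T)))
      atTop (𝓝 0) := by
  obtain ⟨C, hC⟩ := exists_abs_mul_integral_sin_mul_besselJ_thirdSide_le hp hq n hu hu'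
  have hbdd : IsBoundedUnder (· ≤ ·) atTop (norm ∘ fun T : ℝ => p * q * T * ∫ φ in (0:ℝ)..π,
      Real.sin φ * thirdSide p q φ ^ n * u φ * besselJ n (thirdSide p q φ * T)) :=
    isBoundedUnder_of_eventually_le (.of_forall hC)
  have hinv : Tendsto (fun T : ℝ => (p * q * √T)⁻¹) atTop (𝓝 0) :=
    (Real.tendsto_sqrt_atTop.const_mul_atTop (mul_pos hp hq)).inv_tendsto_atTop
  refine (hinv.zero_mul_isBoundedUnder_le hbdd).congr' ?_
  filter_upwards [eventually_gt_atTop 0] with T hT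
  have hscale : (p * q * √T)⁻¹ * (p * q * T) = √T := by
    nth_rw 2 [← Real.mul_self_sqrt hT.le]
    field_simp
  rw [← mul_assoc, hscale, ← intervalIntegral.integral_const_mul]
  congr 1 with φ
  ring

lemma tendsto_integral_mul_sqrt_mul_besselJ_thirdSide (hp : 0 < p) (hq : 0 < q) (n : ℕ)
    {h : ℝ → ℝ} (hh : Continuous h) :
    Tendsto (fun T : ℝ => ∫ φ in (0:ℝ)..π, h φ * (√T * besselJ n (thirdSide p q φ * T)))
      atTop (𝓝 0) := by
  obtain ⟨C, hC⟩ := exists_abs_sqrt_mul_besselJ_mul_le n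
  have hw := (intervalIntegrable_inv_sqrt_thirdSide hp hq).const_mul C
  have hcont (T : ℝ) : Continuous fun φ => √T * besselJ n (thirdSide p q φ * T) := by fun_prop
  have hbound : ∀ᶠ T : ℝ in atTop, ∀ φ ∈ Set.Ioc 0 π,
      |√T * besselJ n (thirdSide p q φ * T)| ≤ C * (√(thirdSide p q φ))⁻¹ :=
    (eventually_ge_atTop 0).mono fun T hT φ hφ => hC _ T (thirdSide_pos hp hq hφ) hT
  refine tendsto_integral_mul_zero_of_ne_zero pi_pos.le hw hcont hbound
    (s := fun φ => Real.sin φ * thirdSide p q φ ^ n) (by fun_prop) hh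
    (fun φ hφ => (mul_pos (Real.sin_pos_of_mem_Ioo hφ)
      (pow_pos (thirdSide_pos hp hq ⟨hφ.1, hφ.2.le⟩) n)).ne')
    fun u hu => tendsto_integral_mul_zero_of_forall_polynomial pi_pos.le hw hcont hbound
      (by fun_prop) hu fun Q => ?_
  exact tendsto_integral_sin_mul_sqrt_mul_besselJ_thirdSide hp hq n (fun φ => Q.hasDerivAt φ)
    Q.derivative.continuous

end Oscillation

section Localization

variable {p q a : ℝ}

lemma tendsto_integral_mul_lommel_kernel (hp : 0 < p) (hq : 0 < q) (ha : 0 < a) (n : ℕ)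
    {h : ℝ → ℝ} (hh : Continuous h) :
    Tendsto (fun T : ℝ => ∫ φ in (0:ℝ)..π, h φ *
      (T * (thirdSide p q φ * besselJ (n + 1) (thirdSide p q φ * T) * besselJ n (a * T) -
        a * besselJ n (thirdSide p q φ * T) * besselJ (n + 1) (a * T)))) atTop (𝓝 0) := by
  have hsucc := (tendsto_integral_mul_sqrt_mul_besselJ_thirdSide hp hq (n + 1)
    (h := fun φ => h φ * thirdSide p q φ) (by fun_prop)).zero_mul_isBoundedUnder_le
      (isBoundedUnder_sqrt_mul_besselJ n ha)
  have hself := (tendsto_integral_mul_sqrt_mul_besselJ_thirdSide hp hq n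
    (h := fun φ => h φ * a) (by fun_prop)).zero_mul_isBoundedUnder_le
      (isBoundedUnder_sqrt_mul_besselJ (n + 1) ha)
  refine (sub_zero (0 : ℝ) ▸ hsucc.sub hself).congr' ?_
  filter_upwards [eventually_ge_atTop 0] with T hT
  push_cast
  rw [← intervalIntegral.integral_mul_const, ← intervalIntegral.integral_mul_const,
    ← intervalIntegral.integral_sub
    (Continuous.intervalIntegrable (by fun_prop) _ _)
    (Continuous.intervalIntegrable (by fun_prop) _ _)]
  congr 1 with φ
  linear_combination h φ *
    (thirdSide p q φ * besselJ (n + 1) (thirdSide p q φ * T) * besselJ n (a * T) -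
      a * besselJ n (thirdSide p q φ * T) * besselJ (n + 1) (a * T)) * Real.mul_self_sqrt hT

lemma tendsto_integral_besselJ_mul_integral_thirdSide_zero (hp : 0 < p) (hq : 0 < q) (ha : 0 < a)
    (n : ℕ) {g h : ℝ → ℝ} (hg : Continuous g) (hh : Continuous h)
    (hgh : ∀ φ ∈ Set.Icc 0 π, g φ = h φ * (thirdSide p q φ ^ 2 - a ^ 2)) :
    Tendsto (fun T : ℝ => ∫ t in (0:ℝ)..T, besselJ n (a * t) * t *
      ∫ φ in (0:ℝ)..π, g φ * besselJ n (thirdSide p q φ * t)) atTop (𝓝 0) := by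
  refine (tendsto_integral_mul_lommel_kernel hp hq ha n hh).congr fun T => ?_
  symm
  calc ∫ t in (0:ℝ)..T, besselJ n (a * t) * t *
        ∫ φ in (0:ℝ)..π, g φ * besselJ n (thirdSide p q φ * t)
      = ∫ φ in (0:ℝ)..π, g φ *
          ∫ t in (0:ℝ)..T, besselJ n (a * t) * besselJ n (thirdSide p q φ * t) * t := by
        simp_rw [← intervalIntegral.integral_const_mul]
        rw [integral_integral_swap_of_continuous (by unfold Function.uncurry; fun_prop)]
        congr 1 with φ
        congr 1 with t
        ring
    _ = _ := by
        refine intervalIntegral.integral_congr fun φ hφ => ?_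
        rw [Set.uIcc_of_le pi_pos.le] at hφ
        rw [hgh φ hφ, mul_assoc, lommel_integral_besselJ]

end Localization

section Weber

variable {a b : ℝ}

lemma tendsto_integral_besselJ_mul_besselJ_succ_zero (n : ℕ) (hb : 0 ≤ b) (hab : b < a) :
    Tendsto (fun T : ℝ => ∫ t in (0:ℝ)..T, besselJ n (a * t) * besselJ (n + 1) (b * t))
      atTop (𝓝 0) := by
  rcases hb.eq_or_lt with rfl | hb
  · simp [besselJ_apply_zero (by omega : (n : ℤ) + 1 ≠ 0)]
  -- An isosceles triangle with legs `b / 2` has `|p - q| = 0` and `p + q = b`, so that the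
  -- average of `J_n` over its third side is a multiple of `J_{n+1}(b t)` alone.
  have hc : 0 < b / 2 := half_pos hb
  have hside (φ : ℝ) : thirdSide (b / 2) (b / 2) φ ^ 2 - a ^ 2 ≠ 0 := by
    rw [thirdSide_sq]
    nlinarith [Real.neg_one_le_cos φ]
  have hrep (t : ℝ) : besselJ n (a * t) * besselJ (n + 1) (b * t) =
      b / 2 * (b / 2) / b ^ (n + 1) * (besselJ n (a * t) * t * ∫ φ in (0:ℝ)..π,
        Real.sin φ * thirdSide (b / 2) (b / 2) φ ^ n *
          besselJ n (thirdSide (b / 2) (b / 2) φ * t)) := by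
    have hint := mul_integral_sin_mul_besselJ_thirdSide hc hc n t
      (fun φ => hasDerivAt_const φ (1 : ℝ)) continuous_const
    simp only [add_halves, sub_self, abs_zero, zero_pow n.succ_ne_zero, zero_mul, mul_one,
      intervalIntegral.integral_zero, sub_zero] at hint
    rw [div_mul_eq_mul_div, eq_div_iff (pow_pos hb _).ne']
    linear_combination -besselJ n (a * t) * hint
  have hlim := tendsto_integral_besselJ_mul_integral_thirdSide_zero hc hc (hb.trans hab) n
    (g := fun φ => Real.sin φ * thirdSide (b / 2) (b / 2) φ ^ n)
    (h := fun φ => Real.sin φ * thirdSide (b / 2) (b / 2) φ ^ n /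
      (thirdSide (b / 2) (b / 2) φ ^ 2 - a ^ 2)) (by fun_prop)
    (by fun_prop (disch := exact hside))
    (fun φ _ => (div_mul_cancel₀ _ (hside φ)).symm)
  simp_rw [hrep, intervalIntegral.integral_const_mul]
  simpa using hlim.const_mul (b / 2 * (b / 2) / b ^ (n + 1))

lemma tendsto_integral_besselJ_zero_mul_besselJ_one (ha : 0 < a) (hab : a < b) :
    Tendsto (fun T : ℝ => ∫ t in (0:ℝ)..T, besselJ 0 (a * t) * besselJ 1 (b * t))
      atTop (𝓝 b⁻¹) := by
  have hb := ha.trans hab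
  have hJ (c t : ℝ) : HasDerivAt (fun t => besselJ 0 (c * t)) (-c * besselJ 1 (c * t)) t :=
    ((hasDerivAt_besselJ_zero (c * t)).scomp t ((hasDerivAt_id t).const_mul c)).congr_deriv
      (by simp)
  have hderiv (t : ℝ) : HasDerivAt (fun t => besselJ 0 (a * t) * besselJ 0 (b * t))
      (-a * (besselJ 0 (b * t) * besselJ 1 (a * t)) +
        -b * (besselJ 0 (a * t) * besselJ 1 (b * t))) t :=
    ((hJ a t).mul (hJ b t)).congr_deriv (by ring)
  have hparts (T : ℝ) : ∫ t in (0:ℝ)..T, besselJ 0 (a * t) * besselJ 1 (b * t) =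
      b⁻¹ * (1 - besselJ 0 (a * T) * besselJ 0 (b * T) -
        a * ∫ t in (0:ℝ)..T, besselJ 0 (b * t) * besselJ 1 (a * t)) := by
    have hftc := intervalIntegral.integral_eq_sub_of_hasDerivAt (a := 0) (b := T)
      (fun t _ => hderiv t) (Continuous.intervalIntegrable (by fun_prop) _ _)
    rw [intervalIntegral.integral_add (Continuous.intervalIntegrable (by fun_prop) _ _)
      (Continuous.intervalIntegrable (by fun_prop) _ _), intervalIntegral.integral_const_mul,
      intervalIntegral.integral_const_mul, mul_zero, mul_zero, besselJ_zero_zero] at hftc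
    rw [eq_inv_mul_iff_mul_eq₀ hb.ne']
    linear_combination -hftc
  simp_rw [hparts]
  have hlim := ((((tendsto_besselJ_mul_atTop 0 ha).mul
    (tendsto_besselJ_mul_atTop 0 hb)).const_sub 1).sub
      ((tendsto_integral_besselJ_mul_besselJ_succ_zero 0 ha.le hab).const_mul a)).const_mul b⁻¹
  simpa using hlim

end Weber

section Concentration

lemma exists_continuous_eq_mul_sub {f k : ℝ → ℝ} {a b γ k' : ℝ} (hγ : γ ∈ Set.Ioo a b)
    (hf : ContinuousOn f (Set.Icc a b)) (hf' : DifferentiableAt ℝ f γ) (hfγ : f γ = 0)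
    (hk : ContinuousOn k (Set.Icc a b)) (hkinj : Set.InjOn k (Set.Icc a b))
    (hk' : HasDerivAt k k' γ) (hk'0 : k' ≠ 0) :
    ∃ h : ℝ → ℝ, Continuous h ∧ ∀ x ∈ Set.Icc a b, f x = h x * (k x - k γ) := by
  have hnhds : Set.Icc a b ∈ 𝓝 γ := Icc_mem_nhds hγ.1 hγ.2
  have hk0 : ∀ x ∈ Set.Icc a b, dslope k γ x ≠ 0 := by
    intro x hx
    rcases eq_or_ne x γ with rfl | hxγ
    · rwa [dslope_same, hk'.deriv]
    · rw [dslope_of_ne k hxγ, slope_def_field]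
      exact div_ne_zero (sub_ne_zero.2 (hkinj.ne hx (Set.Ioo_subset_Icc_self hγ) hxγ))
        (sub_ne_zero.2 hxγ)
  have hquot : ContinuousOn (fun x => dslope f γ x / dslope k γ x) (Set.Icc a b) :=
    ((continuousOn_dslope hnhds).2 ⟨hf, hf'⟩).div
      ((continuousOn_dslope hnhds).2 ⟨hk, hk'.differentiableAt⟩) hk0
  refine ⟨Set.IccExtend (hγ.1.trans hγ.2).le
    ((Set.Icc a b).domRestrict fun x => dslope f γ x / dslope k γ x),
    (continuousOn_iff_continuous_domRestrict.1 hquot).Icc_extend', fun x hx => ?_⟩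
  have := hk0 x hx
  rw [Set.IccExtend_of_mem _ _ hx, Set.domRestrict_apply, ← sub_smul_dslope k γ x,
    ← sub_zero (f x), ← hfγ, ← sub_smul_dslope f γ x, smul_eq_mul, smul_eq_mul]
  field_simp

variable {p q : ℝ}

@[fun_prop]
lemma continuous_integral_mul_besselJ_thirdSide (n : ℤ) {f : ℝ → ℝ} (hf : Continuous f) :
    Continuous fun t : ℝ => ∫ φ in (0:ℝ)..π, f φ * besselJ n (thirdSide p q φ * t) := by
  apply intervalIntegral.continuous_parametric_intervalIntegral_of_continuous'
  unfold Function.uncurry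
  fun_prop

lemma tendsto_integral_besselJ_zero_mul_integral_sin (hp : 0 < p) (hq : 0 < q) {a : ℝ}
    (hpqa : |p - q| < a) (hapq : a < p + q) :
    Tendsto (fun T : ℝ => ∫ t in (0:ℝ)..T, besselJ 0 (a * t) * t *
      ∫ φ in (0:ℝ)..π, Real.sin φ * besselJ 0 (thirdSide p q φ * t)) atTop (𝓝 (p * q)⁻¹) := by
  have ha : 0 < a := (abs_nonneg _).trans_lt hpqa
  have hrep (t : ℝ) : besselJ 0 (a * t) * t *
        ∫ φ in (0:ℝ)..π, Real.sin φ * besselJ 0 (thirdSide p q φ * t) =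
      (p * q)⁻¹ * ((p + q) * (besselJ 0 (a * t) * besselJ 1 ((p + q) * t)) -
        |p - q| * (besselJ 0 (a * t) * besselJ 1 (|p - q| * t))) := by
    have hint := mul_integral_sin_mul_besselJ_thirdSide hp hq 0 t
      (fun φ => hasDerivAt_const φ (1 : ℝ)) continuous_const
    simp only [pow_zero, mul_one, Nat.cast_zero, zero_add, pow_one, zero_mul,
      intervalIntegral.integral_zero, sub_zero] at hint
    rw [eq_inv_mul_iff_mul_eq₀ (mul_pos hp hq).ne']
    linear_combination besselJ 0 (a * t) * hint
  have hlim := (((tendsto_integral_besselJ_zero_mul_besselJ_one ha hapq).const_mul (p + q)).sub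
    ((tendsto_integral_besselJ_mul_besselJ_succ_zero 0 (abs_nonneg _) hpqa).const_mul
      |p - q|)).const_mul (p * q)⁻¹
  rw [mul_inv_cancel₀ (add_pos hp hq).ne', mul_zero, sub_zero, mul_one] at hlim
  refine hlim.congr fun T => ?_
  simp_rw [hrep]
  rw [intervalIntegral.integral_const_mul, intervalIntegral.integral_sub
    (Continuous.intervalIntegrable (by fun_prop) _ _)
    (Continuous.intervalIntegrable (by fun_prop) _ _), intervalIntegral.integral_const_mul,
    intervalIntegral.integral_const_mul]
  simp

lemma tendsto_integral_besselJ_zero_mul_integral_thirdSide (hp : 0 < p) (hq : 0 < q) {γ : ℝ}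
    (hγ : γ ∈ Set.Ioo 0 π) {f : ℝ → ℝ} (hf : Continuous f) (hfγ : DifferentiableAt ℝ f γ) :
    Tendsto (fun T : ℝ => ∫ t in (0:ℝ)..T, besselJ 0 (thirdSide p q γ * t) * t *
      ∫ φ in (0:ℝ)..π, f φ * besselJ 0 (thirdSide p q φ * t)) atTop
      (𝓝 (f γ / (p * q * Real.sin γ))) := by
  have hsin : 0 < Real.sin γ := Real.sin_pos_of_mem_Ioo hγ
  obtain ⟨hlower, hupper⟩ := thirdSide_mem_Ioo hp hq hγ
  obtain ⟨h, hh, hfh⟩ := exists_continuous_eq_mul_sub (k := fun φ => thirdSide p q φ ^ 2) hγ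
    (f := fun φ => f φ - f γ / Real.sin γ * Real.sin φ) (by fun_prop) (by fun_prop)
    (by rw [div_mul_cancel₀ _ hsin.ne', sub_self]) (by fun_prop)
    (fun x hx y hy hxy => (strictMonoOn_thirdSide hp hq).injOn hx hy
      ((sq_eq_sq₀ (thirdSide_nonneg _ _ _) (thirdSide_nonneg _ _ _)).1 hxy))
    (hasDerivAt_thirdSide_sq p q γ) (by positivity)
  have hzero := tendsto_integral_besselJ_mul_integral_thirdSide_zero hp hq
    (thirdSide_pos hp hq ⟨hγ.1, hγ.2.le⟩) 0 (by fun_prop) hh hfh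
  have hmain := (tendsto_integral_besselJ_zero_mul_integral_sin hp hq hlower hupper).const_mul
    (f γ / Real.sin γ)
  have hvalue : 0 + f γ / Real.sin γ * (p * q)⁻¹ = f γ / (p * q * Real.sin γ) := by
    rw [zero_add]
    field_simp
  refine (hvalue ▸ hzero.add hmain).congr fun T => ?_
  rw [Nat.cast_zero, ← intervalIntegral.integral_const_mul, ← intervalIntegral.integral_add
    (Continuous.intervalIntegrable (by fun_prop) _ _)
    (Continuous.intervalIntegrable (by fun_prop) _ _)]
  congr 1 with t
  simp_rw [sub_mul, mul_assoc (f γ / Real.sin γ)]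
  rw [intervalIntegral.integral_sub (Continuous.intervalIntegrable (by fun_prop) _ _)
    (Continuous.intervalIntegrable (by fun_prop) _ _), intervalIntegral.integral_const_mul]
  ring

end Concentration

theorem stmt_7 (ρ₁ ρ₂ ρ₃ γ₃ : ℝ) (ℓ : ℤ)
    (h₁ : 0 < ρ₁) (h₂ : 0 < ρ₂) (h₃ : 0 < ρ₃)
    (htri₁ : |ρ₂ - ρ₃| < ρ₁) (htri₂ : ρ₁ < ρ₂ + ρ₃)
    (hγ₃ : γ₃ ∈ Set.Ioo 0 Real.pi)
    (hlaw : ρ₁ ^ 2 = ρ₂ ^ 2 + ρ₃ ^ 2 - 2 * ρ₂ * ρ₃ * Real.cos γ₃) :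
    Tendsto
      (fun T : ℝ => ∫ lam in (0:ℝ)..T,
        besselJ 0 (ρ₁ * lam) * besselJ ℓ (ρ₂ * lam) * besselJ ℓ (ρ₃ * lam) * lam)
      atTop
      (𝓝 (Real.cos (ℓ * γ₃) / (Real.pi * ρ₂ * ρ₃ * Real.sin γ₃))) := by
  obtain rfl : ρ₁ = thirdSide ρ₂ ρ₃ γ₃ := by rw [thirdSide, ← hlaw, Real.sqrt_sq h₁.le]
  have hlim := (tendsto_integral_besselJ_zero_mul_integral_thirdSide h₂ h₃ hγ₃
    (f := fun φ => Real.cos (ℓ * φ)) (by fun_prop) (by fun_prop)).const_mul (1 / π)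
  have hvalue : 1 / π * (Real.cos (ℓ * γ₃) / (ρ₂ * ρ₃ * Real.sin γ₃)) =
      Real.cos (ℓ * γ₃) / (π * ρ₂ * ρ₃ * Real.sin γ₃) := by
    rw [div_mul_div_comm, one_mul, ← mul_assoc, ← mul_assoc]
  rw [hvalue] at hlim
  refine hlim.congr' ?_
  filter_upwards [eventually_ge_atTop 0] with T hT
  rw [← intervalIntegral.integral_const_mul]
  refine intervalIntegral.integral_congr fun t ht => ?_
  have ht0 : 0 ≤ t := (Set.uIcc_of_le hT ▸ ht).1
  have hproduct := besselJ_mul_besselJ_eq_integral ℓ (ρ₂ * t) (ρ₃ * t)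
  simp_rw [thirdSide_mul_right ρ₂ ρ₃ _ ht0] at hproduct
  linear_combination -besselJ 0 (thirdSide ρ₂ ρ₃ γ₃ * t) * t * hproduct
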